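/- Let μₙ ∈ ℝ and κₙ, αₙ, βₙ > 0. For every probability measure Q on ℝ absolutely continuous with respect to Lebesgue measure, with density q such that q·log q is Lebesgue-integrable and ξ ↦ q(ξ)·ξ² is Lebesgue-integrable, the normal-gamma-posterior-averaged KL divergence satisfies ∫ KL(Q ‖ N(μ, λ^{−1})) dNG(μₙ, κₙ, αₙ, βₙ)(μ, λ) = KL(Q ‖ N(μₙ, βₙ/αₙ)) + (1/2)(1/κₙ + log αₙ − ψ(αₙ)), where ψ is the digamma function. -/

import Mathlib

open MeasureTheory ProbabilityTheory Real
open scoped ENNReal NNReal Classical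

/-- Kullback-Leibler divergence: `∫ log (dQ/dP) dQ` when `Q ≪ P` and the
log-likelihood ratio is integrable, `+∞` otherwise. -/
noncomputable def klDiv {Ω : Type*} [MeasurableSpace Ω] (Q P : Measure Ω) : ℝ≥0∞ :=
  if Q ≪ P ∧ Integrable (fun x => Real.log (Q.rnDeriv P x).toReal) Q
  then ENNReal.ofReal (∫ x, Real.log (Q.rnDeriv P x).toReal ∂Q)
  else ⊤

/-- The digamma function: derivative of `log ∘ Γ`. -/
noncomputable def digamma (x : ℝ) : ℝ := deriv (fun y => Real.log (Real.Gamma y)) x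

/-- Joint density of the normal-gamma distribution `NG(m, κ, α, β)` at `p = (μ, λ)`:
`N(μ | m, (κλ)⁻¹) · Gamma(λ | α, β)`. -/
noncomputable def normalGammaPDFReal (m κ α β : ℝ) (p : ℝ × ℝ) : ℝ :=
  gaussianPDFReal m (Real.toNNReal (κ * p.2)⁻¹) p.1 * gammaPDFReal α β p.2

/-- The normal-gamma distribution `NG(m, κ, α, β)` as a measure on `ℝ × ℝ`
(supported on `ℝ × (0, ∞)`). -/
noncomputable def normalGamma (m κ α β : ℝ) : Measure (ℝ × ℝ) :=
  MeasureTheory.volume.withDensity (fun p => ENNReal.ofReal (normalGammaPDFReal m κ α β p))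

/-!
Fix the reference law `P₀ = N(μₙ, βₙ / αₙ)`. If `KL(Q ‖ P₀)` is infinite, then so is
`KL(Q ‖ N(μ, v))` for all `μ` and `v > 0`. Otherwise Young's inequality
`r * y ≤ klFun r + exp y`, combined with the exponential integrability of a small multiple of
`x ^ 2` under `P₀` (Fernique), shows that `Q` has a second moment, and
`KL(Q ‖ N(μ, λ⁻¹)) - KL(Q ‖ P₀)` is the `Q`-integral of an explicit quadratic. It is an affine
combination of `log λ`, `λ`, `λ (μ - μₙ)` and `λ (μ - μₙ) ^ 2`, whose means under the
normal-gamma law are `ψ(αₙ) - log βₙ`, `αₙ / βₙ`, `0` and `1 / κₙ`. The moments of `Q` cancel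
because `E λ = αₙ / βₙ` is the precision of `P₀`. The mean of `log λ` is the derivative at `0`
of the cumulant generating function `s ↦ log E λ ^ s`.
-/

section GammaDistribution

instance instSFiniteGammaMeasure (a r : ℝ) : SFinite (gammaMeasure a r) := by
  unfold gammaMeasure
  infer_instance

lemma ae_pos_gammaMeasure (a r : ℝ) : ∀ᵐ x ∂gammaMeasure a r, 0 < x := by
  rw [gammaMeasure, ae_withDensity_iff (f := gammaPDF a r)
    (measurable_gammaPDFReal a r).ennreal_ofReal]
  filter_upwards [Measure.ae_ne volume 0] with x hx hpdf
  contrapose! hpdf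
  exact gammaPDF_of_neg (lt_of_le_of_ne hpdf hx)

variable {a r s : ℝ}

lemma gammaPDF_mul_ofReal_rpow (ha : 0 < a) (hr : 0 < r) (has : 0 < a + s) {x : ℝ} (hx : x ≠ 0) :
    gammaPDF a r x * ENNReal.ofReal (x ^ s) =
      ENNReal.ofReal (Gamma (a + s) / (Gamma a * r ^ s)) * gammaPDF (a + s) r x := by
  rcases lt_or_gt_of_ne hx with hneg | hpos
  · simp only [gammaPDF_of_neg hneg, zero_mul, mul_zero]
  rw [gammaPDF_of_nonneg hpos.le, gammaPDF_of_nonneg hpos.le,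
    ← ENNReal.ofReal_mul (by positivity), ← ENNReal.ofReal_mul (by positivity),
    rpow_add hr, show a + s - 1 = (a - 1) + s by ring, rpow_add hpos]
  congr 1
  field_simp

lemma lintegral_rpow_gammaMeasure (ha : 0 < a) (hr : 0 < r) (has : 0 < a + s) :
    ∫⁻ x, ENNReal.ofReal (x ^ s) ∂gammaMeasure a r =
      ENNReal.ofReal (Gamma (a + s) / (Gamma a * r ^ s)) := by
  have hpdf (b : ℝ) : Measurable (gammaPDF b r) := (measurable_gammaPDFReal b r).ennreal_ofReal
  calc ∫⁻ x, ENNReal.ofReal (x ^ s) ∂gammaMeasure a r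
    _ = ∫⁻ x, gammaPDF a r x * ENNReal.ofReal (x ^ s) :=
      lintegral_withDensity_eq_lintegral_mul _ (hpdf a) (by fun_prop)
    _ = ∫⁻ x, ENNReal.ofReal (Gamma (a + s) / (Gamma a * r ^ s)) * gammaPDF (a + s) r x :=
      lintegral_congr_ae <| (Measure.ae_ne volume 0).mono fun _ ↦
        gammaPDF_mul_ofReal_rpow ha hr has
    _ = ENNReal.ofReal (Gamma (a + s) / (Gamma a * r ^ s)) := by
      rw [lintegral_const_mul _ (hpdf _), lintegral_gammaPDF_eq_one has hr, mul_one]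

lemma integrable_rpow_gammaMeasure (ha : 0 < a) (hr : 0 < r) (has : 0 < a + s) :
    Integrable (fun x ↦ x ^ s) (gammaMeasure a r) := by
  refine ⟨by fun_prop, ?_⟩
  rw [hasFiniteIntegral_iff_ofReal ((ae_pos_gammaMeasure a r).mono fun x hx ↦ by positivity),
    lintegral_rpow_gammaMeasure ha hr has]
  exact ENNReal.ofReal_lt_top

lemma integral_rpow_gammaMeasure (ha : 0 < a) (hr : 0 < r) (has : 0 < a + s) :
    ∫ x, x ^ s ∂gammaMeasure a r = Gamma (a + s) / (Gamma a * r ^ s) := by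
  rw [integral_eq_lintegral_of_nonneg_ae
    ((ae_pos_gammaMeasure a r).mono fun x hx ↦ by positivity) (by fun_prop),
    lintegral_rpow_gammaMeasure ha hr has, ENNReal.toReal_ofReal (by positivity)]

lemma integrable_id_gammaMeasure (ha : 0 < a) (hr : 0 < r) :
    Integrable (fun x ↦ x) (gammaMeasure a r) := by
  simpa only [rpow_one] using integrable_rpow_gammaMeasure (s := 1) ha hr (by positivity)

lemma integral_id_gammaMeasure (ha : 0 < a) (hr : 0 < r) :
    ∫ x, x ∂gammaMeasure a r = a / r := by
  have hΓ : Gamma a ≠ 0 := (Gamma_pos_of_pos ha).ne'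
  have h := integral_rpow_gammaMeasure (s := 1) ha hr (by positivity)
  simp only [rpow_one, Gamma_add_one ha.ne'] at h
  rw [h]
  field_simp

lemma integrable_sqrt_gammaMeasure (ha : 0 < a) (hr : 0 < r) :
    Integrable (fun x ↦ √x) (gammaMeasure a r) := by
  simpa only [sqrt_eq_rpow] using integrable_rpow_gammaMeasure (s := 1 / 2) ha hr (by positivity)

lemma exp_mul_log_ae_eq_rpow_gammaMeasure (a r s : ℝ) :
    (fun x ↦ exp (s * log x)) =ᵐ[gammaMeasure a r] fun x ↦ x ^ s := by
  filter_upwards [ae_pos_gammaMeasure a r] with x hx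
  rw [rpow_def_of_pos hx, mul_comm]

lemma Ioi_neg_subset_integrableExpSet_log_gammaMeasure (ha : 0 < a) (hr : 0 < r) :
    Set.Ioi (-a) ⊆ integrableExpSet log (gammaMeasure a r) := fun s hs ↦
  (integrable_rpow_gammaMeasure ha hr (neg_lt_iff_pos_add'.1 hs)).congr
    (exp_mul_log_ae_eq_rpow_gammaMeasure a r s).symm

lemma zero_mem_interior_integrableExpSet_log_gammaMeasure (ha : 0 < a) (hr : 0 < r) :
    0 ∈ interior (integrableExpSet log (gammaMeasure a r)) :=
  interior_maximal (Ioi_neg_subset_integrableExpSet_log_gammaMeasure ha hr) isOpen_Ioi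
    (neg_lt_zero.2 ha)

lemma cgf_log_gammaMeasure (ha : 0 < a) (hr : 0 < r) (has : 0 < a + s) :
    cgf log (gammaMeasure a r) s = log (Gamma (a + s)) - log (Gamma a) - s * log r := by
  have hΓ : Gamma a ≠ 0 := (Gamma_pos_of_pos ha).ne'
  have hΓs : Gamma (a + s) ≠ 0 := (Gamma_pos_of_pos has).ne'
  have hrs : r ^ s ≠ 0 := (rpow_pos_of_pos hr s).ne'
  rw [cgf, mgf, integral_congr_ae (exp_mul_log_ae_eq_rpow_gammaMeasure a r s),
    integral_rpow_gammaMeasure ha hr has, log_div hΓs (mul_ne_zero hΓ hrs), log_mul hΓ hrs,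
    log_rpow hr]
  ring

lemma integrable_log_gammaMeasure (ha : 0 < a) (hr : 0 < r) :
    Integrable log (gammaMeasure a r) :=
  integrable_of_mem_interior_integrableExpSet
    (zero_mem_interior_integrableExpSet_log_gammaMeasure ha hr)

lemma hasDerivAt_log_Gamma (ha : 0 < a) :
    HasDerivAt (fun x ↦ log (Gamma x)) (digamma a) a :=
  have hΓ : DifferentiableAt ℝ Gamma a := differentiableAt_Gamma fun n ↦ by
    linarith [n.cast_nonneg (α := ℝ)]
  (hΓ.log (Gamma_pos_of_pos ha).ne').hasDerivAt

lemma integral_log_gammaMeasure (ha : 0 < a) (hr : 0 < r) :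
    ∫ x, log x ∂gammaMeasure a r = digamma a - log r := by
  have := isProbabilityMeasure_gammaMeasure ha hr
  have hcgf : cgf log (gammaMeasure a r) =ᶠ[nhds 0]
      fun s ↦ log (Gamma (a + s)) - log (Gamma a) - s * log r := by
    filter_upwards [Ioi_mem_nhds (neg_lt_zero.2 ha)] with s hs
    exact cgf_log_gammaMeasure ha hr (neg_lt_iff_pos_add'.1 hs)
  have hderiv : HasDerivAt (fun s ↦ log (Gamma (a + s)) - log (Gamma a) - s * log r)
      (digamma a - log r) 0 := by
    have h : HasDerivAt (fun s ↦ log (Gamma (a + s))) (digamma a) 0 :=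
      HasDerivAt.comp_const_add a 0 (by simpa only [add_zero] using hasDerivAt_log_Gamma ha)
    exact (h.sub_const _).sub (hasDerivAt_mul_const (log r))
  have hmean := deriv_cgf_zero (zero_mem_interior_integrableExpSet_log_gammaMeasure ha hr)
  rw [hcgf.deriv_eq, hderiv.deriv, probReal_univ, div_one] at hmean
  exact hmean.symm

end GammaDistribution

section KullbackLeibler

variable {Ω : Type*} [MeasurableSpace Ω]

lemma klDiv_eq_informationTheory_klDiv (Q P : Measure Ω) [IsProbabilityMeasure Q]
    [IsProbabilityMeasure P] : klDiv Q P = InformationTheory.klDiv Q P := by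
  simp only [klDiv, InformationTheory.klDiv_def, llr_def, probReal_univ, add_sub_cancel_right]

lemma mul_le_klFun_add_exp {r : ℝ} (hr : 0 ≤ r) (y : ℝ) :
    r * y ≤ InformationTheory.klFun r + exp y := by
  rw [InformationTheory.klFun_apply]
  rcases hr.eq_or_lt with rfl | hr
  · simp only [zero_mul, zero_add, sub_zero]
    positivity
  · have h : r * (y - log r + 1) ≤ r * exp (y - log r) := by
      gcongr
      exact add_one_le_exp _
    rw [exp_sub, exp_log hr, mul_div_cancel₀ _ hr.ne'] at h
    linarith

lemma integrable_of_klDiv_ne_top_of_integrable_exp {μ ν : Measure Ω} [IsFiniteMeasure μ]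
    [IsFiniteMeasure ν] {f : Ω → ℝ} (hμν : InformationTheory.klDiv μ ν ≠ ∞) (hf : 0 ≤ f)
    (hexp : Integrable (fun x ↦ exp (f x)) ν) : Integrable f μ := by
  obtain ⟨hac, hllr⟩ := InformationTheory.klDiv_ne_top_iff.1 hμν
  have hf_meas : AEStronglyMeasurable f ν := by
    simpa only [log_exp] using hexp.aemeasurable.log.aestronglyMeasurable
  have hbound := ((InformationTheory.integrable_klFun_rnDeriv_iff hac).2 hllr).add hexp
  have hmeas : AEStronglyMeasurable (fun x ↦ (μ.rnDeriv ν x).toReal • f x) ν :=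
    (Measure.measurable_rnDeriv μ ν).ennreal_toReal.aestronglyMeasurable.smul hf_meas
  refine (integrable_rnDeriv_smul_iff hac).1 (hbound.mono' hmeas (ae_of_all _ fun x ↦ ?_))
  rw [smul_eq_mul, norm_of_nonneg (mul_nonneg ENNReal.toReal_nonneg (hf x))]
  exact mul_le_klFun_add_exp ENNReal.toReal_nonneg (f x)

lemma toReal_rnDeriv_pos {μ ν : Measure Ω} [SigmaFinite μ] [SigmaFinite ν] (hμν : μ ≪ ν) :
    ∀ᵐ x ∂μ, 0 < (μ.rnDeriv ν x).toReal := by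
  filter_upwards [Measure.rnDeriv_pos hμν, hμν.ae_le (Measure.rnDeriv_lt_top μ ν)] with x hpos htop
  exact ENNReal.toReal_pos hpos.ne' htop.ne

lemma llr_add_llr {μ ν ξ : Measure Ω} [SigmaFinite μ] [SigmaFinite ν] [SigmaFinite ξ]
    (hμν : μ ≪ ν) (hνξ : ν ≪ ξ) : llr μ ν + llr ν ξ =ᵐ[μ] llr μ ξ := by
  filter_upwards [(hμν.trans hνξ).ae_le (Measure.rnDeriv_mul_rnDeriv hμν),
    toReal_rnDeriv_pos hμν, hμν.ae_le (toReal_rnDeriv_pos hνξ)] with x h hμ hν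
  rw [Pi.add_apply, llr, llr, llr, ← h, Pi.mul_apply, ENNReal.toReal_mul, log_mul hμ.ne' hν.ne']

lemma klDiv_ne_top_of_integrable_llr {μ ν ξ : Measure Ω} [SigmaFinite μ] [SigmaFinite ν]
    [SigmaFinite ξ] (hμν : InformationTheory.klDiv μ ν ≠ ∞) (hνξ : ν ≪ ξ)
    (hllr : Integrable (llr ν ξ) μ) : InformationTheory.klDiv μ ξ ≠ ∞ := by
  obtain ⟨hac, hint⟩ := InformationTheory.klDiv_ne_top_iff.1 hμν
  exact InformationTheory.klDiv_ne_top (hac.trans hνξ)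
    ((hint.add hllr).congr (llr_add_llr hac hνξ))

lemma toReal_klDiv_eq_add_integral_llr {μ ν ξ : Measure Ω} [IsProbabilityMeasure μ]
    [IsProbabilityMeasure ν] [IsProbabilityMeasure ξ] (hμν : InformationTheory.klDiv μ ν ≠ ∞)
    (hνξ : ν ≪ ξ) (hllr : Integrable (llr ν ξ) μ) :
    (InformationTheory.klDiv μ ξ).toReal =
      (InformationTheory.klDiv μ ν).toReal + ∫ x, llr ν ξ x ∂μ := by
  obtain ⟨hac, hint⟩ := InformationTheory.klDiv_ne_top_iff.1 hμν
  rw [InformationTheory.toReal_klDiv_of_measure_eq (hac.trans hνξ) (by simp),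
    InformationTheory.toReal_klDiv_of_measure_eq hac (by simp),
    ← integral_congr_ae (llr_add_llr hac hνξ), integral_add' hint hllr]

end KullbackLeibler

section Gaussian

lemma gaussianReal_eq_map_standard (m : ℝ) (v : ℝ≥0) :
    gaussianReal m v = (gaussianReal 0 1).map (fun z ↦ m + √v * z) := by
  have hcomp := Measure.map_map (μ := gaussianReal 0 1) (measurable_const_add m)
    (measurable_const_mul √v)
  rw [gaussianReal_map_const_mul, gaussianReal_map_const_add, mul_zero, zero_add, mul_one] at hcomp
  have hsq : v = .mk (√v ^ 2) (sq_nonneg _) := NNReal.eq (sq_sqrt v.2).symm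
  exact (congrArg (gaussianReal m) hsq).trans hcomp

lemma lintegral_gaussianReal (m : ℝ) {v : ℝ≥0} (hv : v ≠ 0) {f : ℝ → ℝ≥0∞} (hf : Measurable f) :
    ∫⁻ x, f x ∂gaussianReal m v = ∫⁻ x, gaussianPDF m v x * f x := by
  rw [gaussianReal_of_var_ne_zero m hv]
  exact lintegral_withDensity_eq_lintegral_mul _ (measurable_gaussianPDF m v) hf

variable {m m' : ℝ} {v v' : ℝ≥0}

lemma gaussianReal_absolutelyContinuous_gaussianReal (hv : v ≠ 0) (hv' : v' ≠ 0) :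
    gaussianReal m v ≪ gaussianReal m' v' :=
  (gaussianReal_absolutelyContinuous m hv).trans (gaussianReal_absolutelyContinuous' m' hv')

lemma log_gaussianPDFReal (hv : v ≠ 0) (x : ℝ) :
    log (gaussianPDFReal m v x) = -(log (2 * π) + log v) / 2 - (x - m) ^ 2 / (2 * v) := by
  have hv_pos : (0 : ℝ) < v := NNReal.coe_pos.2 hv.pos
  rw [gaussianPDFReal, log_mul (by positivity) (exp_pos _).ne', log_exp, log_inv,
    log_sqrt (by positivity), log_mul (by positivity) hv_pos.ne']
  ring

lemma llr_gaussianReal (hv : v ≠ 0) (hv' : v' ≠ 0) :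
    llr (gaussianReal m v) (gaussianReal m' v') =ᵐ[volume] fun x ↦
      (log v' - log v) / 2 + ((x - m') ^ 2 / (2 * v') - (x - m) ^ 2 / (2 * v)) := by
  have hdiv := Measure.rnDeriv_eq_div (gaussianReal_absolutelyContinuous m hv)
    (gaussianReal_absolutelyContinuous m' hv')
  filter_upwards [(gaussianReal_absolutelyContinuous' m' hv').ae_le hdiv,
    rnDeriv_gaussianReal m v, rnDeriv_gaussianReal m' v'] with x hx hpdf hpdf'
  rw [llr, hx, hpdf, hpdf', ENNReal.toReal_div, toReal_gaussianPDF, toReal_gaussianPDF,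
    log_div (gaussianPDFReal_pos m v x hv).ne' (gaussianPDFReal_pos m' v' x hv').ne',
    log_gaussianPDFReal hv, log_gaussianPDFReal hv']
  ring

variable {Q : Measure ℝ}

lemma absolutelyContinuous_of_klDiv_gaussianReal_ne_top (hv : v ≠ 0)
    (hQ : InformationTheory.klDiv Q (gaussianReal m v) ≠ ∞) : Q ≪ volume :=
  (InformationTheory.klDiv_ne_top_iff.1 hQ).1.trans (gaussianReal_absolutelyContinuous m hv)

lemma memLp_id_two_of_klDiv_gaussianReal_ne_top [IsFiniteMeasure Q]
    (hQ : InformationTheory.klDiv Q (gaussianReal m v) ≠ ∞) : MemLp id 2 Q := by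
  obtain ⟨C, hC, hexp⟩ := IsGaussian.exists_integrable_exp_sq (gaussianReal m v)
  have hsq : Integrable (fun x : ℝ ↦ C * ‖x‖ ^ 2) Q :=
    integrable_of_klDiv_ne_top_of_integrable_exp hQ (fun x ↦ by positivity) hexp
  rw [memLp_two_iff_integrable_sq_norm aestronglyMeasurable_id]
  exact (integrable_const_mul_iff hC.ne'.isUnit _).1 hsq

lemma integrable_sub_sq [IsFiniteMeasure Q] (hQ : MemLp id 2 Q) (c : ℝ) :
    Integrable (fun x ↦ (x - c) ^ 2) Q :=
  (hQ.sub (memLp_const c)).integrable_sq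

lemma integral_sub_sq [IsProbabilityMeasure Q] (hQ : MemLp id 2 Q) (c c' : ℝ) :
    ∫ x, (x - c') ^ 2 ∂Q =
      ∫ x, (x - c) ^ 2 ∂Q - 2 * (c' - c) * ∫ x, (x - c) ∂Q + (c' - c) ^ 2 := by
  have hlin : Integrable (fun x ↦ x - c) Q :=
    (hQ.integrable one_le_two).sub (integrable_const c)
  have hquad : Integrable (fun x ↦ (x - c) ^ 2 - 2 * (c' - c) * (x - c)) Q :=
    (integrable_sub_sq hQ c).sub (hlin.const_mul _)
  have hsplit (x : ℝ) : (x - c') ^ 2 = (x - c) ^ 2 - 2 * (c' - c) * (x - c) + (c' - c) ^ 2 := by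
    ring
  simp_rw [hsplit]
  rw [integral_add hquad (integrable_const _),
    integral_sub (integrable_sub_sq hQ c) (hlin.const_mul _), integral_const_mul,
    integral_const, probReal_univ, one_smul]

lemma integrable_llr_gaussianReal [IsFiniteMeasure Q] (hQ_vol : Q ≪ volume) (hQ : MemLp id 2 Q)
    (hv : v ≠ 0) (hv' : v' ≠ 0) :
    Integrable (llr (gaussianReal m v) (gaussianReal m' v')) Q :=
  ((integrable_const _).add (((integrable_sub_sq hQ m').div_const _).sub
    ((integrable_sub_sq hQ m).div_const _))).congr (hQ_vol.ae_eq (llr_gaussianReal hv hv')).symm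

lemma klDiv_gaussianReal_ne_top [IsFiniteMeasure Q] (hv : v ≠ 0) (hv' : v' ≠ 0)
    (hQ : InformationTheory.klDiv Q (gaussianReal m v) ≠ ∞) :
    InformationTheory.klDiv Q (gaussianReal m' v') ≠ ∞ :=
  klDiv_ne_top_of_integrable_llr hQ (gaussianReal_absolutelyContinuous_gaussianReal hv hv')
    (integrable_llr_gaussianReal (absolutelyContinuous_of_klDiv_gaussianReal_ne_top hv hQ)
      (memLp_id_two_of_klDiv_gaussianReal_ne_top hQ) hv hv')

lemma toReal_klDiv_gaussianReal [IsProbabilityMeasure Q] (hv : v ≠ 0) (hv' : v' ≠ 0)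
    (hQ : InformationTheory.klDiv Q (gaussianReal m v) ≠ ∞) :
    (InformationTheory.klDiv Q (gaussianReal m' v')).toReal =
      (InformationTheory.klDiv Q (gaussianReal m v)).toReal + ((log v' - log v) / 2 +
        ((∫ x, (x - m') ^ 2 ∂Q) / (2 * v') - (∫ x, (x - m) ^ 2 ∂Q) / (2 * v))) := by
  have hQ_vol := absolutelyContinuous_of_klDiv_gaussianReal_ne_top hv hQ
  have hQ_sq := memLp_id_two_of_klDiv_gaussianReal_ne_top hQ
  have hm := (integrable_sub_sq hQ_sq m).div_const (2 * v)
  have hm' := (integrable_sub_sq hQ_sq m').div_const (2 * v')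
  have hsub : Integrable (fun x ↦ (x - m') ^ 2 / (2 * v') - (x - m) ^ 2 / (2 * v)) Q := hm'.sub hm
  rw [toReal_klDiv_eq_add_integral_llr hQ (gaussianReal_absolutelyContinuous_gaussianReal hv hv')
      (integrable_llr_gaussianReal hQ_vol hQ_sq hv hv'),
    integral_congr_ae (hQ_vol.ae_eq (llr_gaussianReal hv hv')),
    integral_add (integrable_const _) hsub, integral_sub hm' hm, integral_const,
    probReal_univ, one_smul, integral_div, integral_div]

end Gaussian

section NormalGamma

/-- The map sending independent `z ∼ N(0, 1)` and `λ ∼ Gamma(α, β)` to the pair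
`(m + z / √(κλ), λ) ∼ NG(m, κ, α, β)`. -/
noncomputable def locationScale (m κ : ℝ) (p : ℝ × ℝ) : ℝ × ℝ :=
  (m + √((κ * p.2)⁻¹) * p.1, p.2)

@[fun_prop]
lemma measurable_locationScale (m κ : ℝ) : Measurable (locationScale m κ) := by
  unfold locationScale
  fun_prop

variable {m κ α β : ℝ}

lemma measurable_normalGammaPDFReal (m κ α β : ℝ) : Measurable (normalGammaPDFReal m κ α β) := by
  have := measurable_gammaPDFReal α β
  unfold normalGammaPDFReal gaussianPDFReal
  fun_prop

lemma ofReal_normalGammaPDFReal (m κ α β x l : ℝ) :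
    ENNReal.ofReal (normalGammaPDFReal m κ α β (x, l)) =
      gammaPDF α β l * gaussianPDF m (κ * l)⁻¹.toNNReal x := by
  rw [normalGammaPDFReal, ENNReal.ofReal_mul (gaussianPDFReal_nonneg _ _ _), mul_comm]
  rfl

lemma lintegral_normalGamma (hκ : 0 < κ) {f : ℝ × ℝ → ℝ≥0∞} (hf : Measurable f) :
    ∫⁻ p, f p ∂normalGamma m κ α β =
      ∫⁻ l, ∫⁻ x, f (x, l) ∂gaussianReal m (κ * l)⁻¹.toNNReal ∂gammaMeasure α β := by
  have hpdf := (measurable_normalGammaPDFReal m κ α β).ennreal_ofReal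
  have hgamma : Measurable (gammaPDF α β) := (measurable_gammaPDFReal α β).ennreal_ofReal
  rw [normalGamma, lintegral_withDensity_eq_lintegral_mul _ hpdf hf, Measure.volume_eq_prod,
    lintegral_prod_symm _ (hpdf.mul hf).aemeasurable, gammaMeasure,
    lintegral_withDensity_eq_lintegral_mul_non_measurable _ hgamma
      (ae_of_all _ fun _ ↦ ENNReal.ofReal_lt_top)]
  refine lintegral_congr_ae ?_
  filter_upwards [Measure.ae_ne volume 0] with l hl
  simp only [Pi.mul_apply, ofReal_normalGammaPDFReal, mul_assoc]
  rcases lt_or_gt_of_ne hl with hneg | hpos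
  · simp only [gammaPDF_of_neg hneg, zero_mul, lintegral_zero]
  · have hv : (κ * l)⁻¹.toNNReal ≠ 0 := (toNNReal_pos.2 (by positivity)).ne'
    have hfl : Measurable (fun x ↦ f (x, l)) := by fun_prop
    rw [lintegral_gaussianReal m hv hfl, lintegral_const_mul _ (by fun_prop)]

lemma normalGamma_eq_map (hκ : 0 < κ) :
    normalGamma m κ α β =
      ((gaussianReal 0 1).prod (gammaMeasure α β)).map (locationScale m κ) := by
  refine Measure.ext_of_lintegral _ fun f hf ↦ ?_
  rw [lintegral_normalGamma hκ hf, lintegral_map hf (measurable_locationScale m κ),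
    lintegral_prod_symm _ (by fun_prop)]
  refine lintegral_congr_ae ?_
  filter_upwards [ae_pos_gammaMeasure α β] with l hl
  rw [gaussianReal_eq_map_standard, lintegral_map (by fun_prop) (by fun_prop),
    coe_toNNReal _ (by positivity)]
  rfl

lemma isProbabilityMeasure_normalGamma (hκ : 0 < κ) (hα : 0 < α) (hβ : 0 < β) :
    IsProbabilityMeasure (normalGamma m κ α β) := by
  have := isProbabilityMeasure_gammaMeasure hα hβ
  rw [normalGamma_eq_map hκ]
  exact Measure.isProbabilityMeasure_map (by fun_prop)

lemma map_snd_normalGamma (hκ : 0 < κ) :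
    (normalGamma m κ α β).map Prod.snd = gammaMeasure α β := by
  rw [normalGamma_eq_map hκ, Measure.map_map measurable_snd (by fun_prop)]
  exact measurePreserving_snd.map_eq

lemma ae_pos_snd_normalGamma (hκ : 0 < κ) : ∀ᵐ p ∂normalGamma m κ α β, 0 < p.2 :=
  ae_of_ae_map measurable_snd.aemeasurable <|
    (map_snd_normalGamma hκ).symm ▸ ae_pos_gammaMeasure α β

lemma integral_comp_snd_normalGamma (hκ : 0 < κ) {f : ℝ → ℝ}
    (hf : AEStronglyMeasurable f (gammaMeasure α β)) :
    ∫ p, f p.2 ∂normalGamma m κ α β = ∫ l, f l ∂gammaMeasure α β := by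
  rw [← map_snd_normalGamma (m := m) hκ] at hf ⊢
  exact (integral_map measurable_snd.aemeasurable hf).symm

lemma integrable_comp_snd_normalGamma (hκ : 0 < κ) {f : ℝ → ℝ}
    (hf : Integrable f (gammaMeasure α β)) :
    Integrable (fun p ↦ f p.2) (normalGamma m κ α β) := by
  rw [← map_snd_normalGamma hκ] at hf
  exact hf.comp_measurable measurable_snd

lemma integrable_log_snd_normalGamma (hκ : 0 < κ) (hα : 0 < α) (hβ : 0 < β) :
    Integrable (fun p ↦ log p.2) (normalGamma m κ α β) :=
  integrable_comp_snd_normalGamma hκ (integrable_log_gammaMeasure hα hβ)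

lemma integral_log_snd_normalGamma (hκ : 0 < κ) (hα : 0 < α) (hβ : 0 < β) :
    ∫ p, log p.2 ∂normalGamma m κ α β = digamma α - log β := by
  rw [integral_comp_snd_normalGamma hκ (by fun_prop), integral_log_gammaMeasure hα hβ]

lemma integrable_snd_normalGamma (hκ : 0 < κ) (hα : 0 < α) (hβ : 0 < β) :
    Integrable (fun p ↦ p.2) (normalGamma m κ α β) :=
  integrable_comp_snd_normalGamma hκ (integrable_id_gammaMeasure hα hβ)

lemma integral_snd_normalGamma (hκ : 0 < κ) (hα : 0 < α) (hβ : 0 < β) :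
    ∫ p, p.2 ∂normalGamma m κ α β = α / β := by
  rw [integral_comp_snd_normalGamma (f := fun l ↦ l) hκ (by fun_prop),
    integral_id_gammaMeasure hα hβ]

lemma comp_locationScale_ae_eq {f g : ℝ × ℝ → ℝ}
    (hfg : ∀ p : ℝ × ℝ, 0 < p.2 → f (locationScale m κ p) = g p) :
    f ∘ locationScale m κ =ᵐ[(gaussianReal 0 1).prod (gammaMeasure α β)] g := by
  filter_upwards [Measure.quasiMeasurePreserving_snd.ae (ae_pos_gammaMeasure α β)] with p hp
  exact hfg p hp

lemma integrable_normalGamma_of_comp_locationScale (hκ : 0 < κ) {f g : ℝ × ℝ → ℝ}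
    (hf : Measurable f) (hfg : ∀ p : ℝ × ℝ, 0 < p.2 → f (locationScale m κ p) = g p)
    (hg : Integrable g ((gaussianReal 0 1).prod (gammaMeasure α β))) :
    Integrable f (normalGamma m κ α β) := by
  rw [normalGamma_eq_map hκ,
    integrable_map_measure hf.aestronglyMeasurable (by fun_prop)]
  exact hg.congr (comp_locationScale_ae_eq hfg).symm

lemma integral_normalGamma_of_comp_locationScale (hκ : 0 < κ) {f g : ℝ × ℝ → ℝ}
    (hf : Measurable f) (hfg : ∀ p : ℝ × ℝ, 0 < p.2 → f (locationScale m κ p) = g p) :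
    ∫ p, f p ∂normalGamma m κ α β = ∫ p, g p ∂(gaussianReal 0 1).prod (gammaMeasure α β) := by
  rw [normalGamma_eq_map hκ, integral_map (by fun_prop) hf.aestronglyMeasurable]
  exact integral_congr_ae (comp_locationScale_ae_eq hfg)

lemma snd_mul_sub_locationScale (hκ : 0 < κ) {p : ℝ × ℝ} (hp : 0 < p.2) :
    (locationScale m κ p).2 * ((locationScale m κ p).1 - m) = (√κ)⁻¹ * (p.1 * √p.2) := by
  have hsqrt : √p.2 ^ 2 = p.2 := sq_sqrt hp.le
  simp only [locationScale, add_sub_cancel_left, sqrt_inv, sqrt_mul hκ.le]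
  field_simp
  rw [hsqrt]

lemma snd_mul_sub_sq_locationScale (hκ : 0 < κ) {p : ℝ × ℝ} (hp : 0 < p.2) :
    (locationScale m κ p).2 * ((locationScale m κ p).1 - m) ^ 2 = κ⁻¹ * p.1 ^ 2 := by
  simp only [locationScale, add_sub_cancel_left, mul_pow]
  rw [sq_sqrt (by positivity)]
  field_simp

lemma integrable_snd_mul_sub_normalGamma (hκ : 0 < κ) (hα : 0 < α) (hβ : 0 < β) :
    Integrable (fun p ↦ p.2 * (p.1 - m)) (normalGamma m κ α β) := by
  have hz : Integrable (fun z ↦ z) (gaussianReal 0 1) :=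
    (memLp_id_gaussianReal 1).integrable le_rfl
  exact integrable_normalGamma_of_comp_locationScale hκ (by fun_prop)
    (fun _ ↦ snd_mul_sub_locationScale hκ)
    ((hz.mul_prod (integrable_sqrt_gammaMeasure hα hβ)).const_mul _)

lemma integral_snd_mul_sub_normalGamma (hκ : 0 < κ) :
    ∫ p, p.2 * (p.1 - m) ∂normalGamma m κ α β = 0 := by
  rw [integral_normalGamma_of_comp_locationScale hκ (by fun_prop)
      (fun _ ↦ snd_mul_sub_locationScale hκ), integral_const_mul,
    integral_prod_mul (fun z : ℝ ↦ z), integral_id_gaussianReal, zero_mul, mul_zero]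

lemma integrable_snd_mul_sub_sq_normalGamma (hκ : 0 < κ) (hα : 0 < α) (hβ : 0 < β) :
    Integrable (fun p ↦ p.2 * (p.1 - m) ^ 2) (normalGamma m κ α β) := by
  have := isProbabilityMeasure_gammaMeasure hα hβ
  have hz : Integrable (fun z ↦ z ^ 2) (gaussianReal 0 1) :=
    (memLp_id_gaussianReal 2).integrable_sq
  exact integrable_normalGamma_of_comp_locationScale hκ (by fun_prop)
    (fun _ ↦ snd_mul_sub_sq_locationScale hκ) ((hz.comp_fst _).const_mul _)

lemma integral_snd_mul_sub_sq_normalGamma (hκ : 0 < κ) (hα : 0 < α) (hβ : 0 < β) :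
    ∫ p, p.2 * (p.1 - m) ^ 2 ∂normalGamma m κ α β = κ⁻¹ := by
  have := isProbabilityMeasure_gammaMeasure hα hβ
  have hvar : ∫ z, z ^ 2 ∂gaussianReal 0 1 = 1 := by
    rw [← variance_of_integral_eq_zero (X := fun z ↦ z) (by fun_prop) integral_id_gaussianReal,
      variance_fun_id_gaussianReal, NNReal.coe_one]
  rw [integral_normalGamma_of_comp_locationScale hκ (by fun_prop)
      (fun _ ↦ snd_mul_sub_sq_locationScale hκ), integral_const_mul,
    integral_fun_fst (fun z : ℝ ↦ z ^ 2), hvar, probReal_univ, one_smul, mul_one]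

lemma integrable_sufficientStatistics_normalGamma (hκ : 0 < κ) (hα : 0 < α) (hβ : 0 < β)
    (c₀ c₁ c₂ c₃ c₄ : ℝ) :
    Integrable (fun p ↦ c₀ + c₁ * log p.2 + c₂ * p.2 + c₃ * (p.2 * (p.1 - m))
      + c₄ * (p.2 * (p.1 - m) ^ 2)) (normalGamma m κ α β) := by
  have := isProbabilityMeasure_normalGamma (m := m) hκ hα hβ
  exact ((((integrable_const c₀).add
    ((integrable_log_snd_normalGamma hκ hα hβ).const_mul c₁)).add
    ((integrable_snd_normalGamma hκ hα hβ).const_mul c₂)).add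
    ((integrable_snd_mul_sub_normalGamma hκ hα hβ).const_mul c₃)).add
    ((integrable_snd_mul_sub_sq_normalGamma hκ hα hβ).const_mul c₄)

lemma integral_sufficientStatistics_normalGamma (hκ : 0 < κ) (hα : 0 < α) (hβ : 0 < β)
    (c₀ c₁ c₂ c₃ c₄ : ℝ) :
    ∫ p, (c₀ + c₁ * log p.2 + c₂ * p.2 + c₃ * (p.2 * (p.1 - m)) + c₄ * (p.2 * (p.1 - m) ^ 2))
        ∂normalGamma m κ α β =
      c₀ + c₁ * (digamma α - log β) + c₂ * (α / β) + c₄ * κ⁻¹ := by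
  have := isProbabilityMeasure_normalGamma (m := m) hκ hα hβ
  have h₀ : Integrable (fun _ ↦ c₀) (normalGamma m κ α β) := integrable_const c₀
  have h₁ := (integrable_log_snd_normalGamma (m := m) hκ hα hβ).const_mul c₁
  have h₂ := (integrable_snd_normalGamma (m := m) hκ hα hβ).const_mul c₂
  have h₃ := (integrable_snd_mul_sub_normalGamma (m := m) hκ hα hβ).const_mul c₃
  have h₄ := (integrable_snd_mul_sub_sq_normalGamma (m := m) hκ hα hβ).const_mul c₄
  rw [integral_add (((h₀.fun_add h₁).fun_add h₂).fun_add h₃) h₄,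
    integral_add ((h₀.fun_add h₁).fun_add h₂) h₃, integral_add (h₀.fun_add h₁) h₂,
    integral_add h₀ h₁, integral_const_mul, integral_const_mul, integral_const_mul,
    integral_const_mul, integral_const, probReal_univ, one_smul,
    integral_log_snd_normalGamma hκ hα hβ, integral_snd_normalGamma hκ hα hβ,
    integral_snd_mul_sub_normalGamma hκ, integral_snd_mul_sub_sq_normalGamma hκ hα hβ,
    mul_zero, add_zero]

end NormalGamma

section PosteriorAverage

lemma coe_lintegral_eq_coe_integral_toReal {Ω : Type*} [MeasurableSpace Ω] {μ : Measure Ω}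
    {f : Ω → ℝ≥0∞} (hf : ∀ᵐ x ∂μ, f x ≠ ∞) (hint : Integrable (fun x ↦ (f x).toReal) μ) :
    ((∫⁻ x, f x ∂μ : ℝ≥0∞) : EReal) = ((∫ x, (f x).toReal ∂μ : ℝ) : EReal) := by
  have hnonneg : 0 ≤ ∫ x, (f x).toReal ∂μ := integral_nonneg fun _ ↦ ENNReal.toReal_nonneg
  rw [← lintegral_congr_ae (hf.mono fun _ ↦ ENNReal.ofReal_toReal),
    ← ofReal_integral_eq_lintegral_ofReal hint (ae_of_all _ fun _ ↦ ENNReal.toReal_nonneg),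
    EReal.coe_ennreal_ofReal, max_eq_left hnonneg]

variable {Q : Measure ℝ} [IsProbabilityMeasure Q] {m v κ α β : ℝ}

lemma toReal_klDiv_gaussianReal_inv (hv : 0 < v)
    (hQ : InformationTheory.klDiv Q (gaussianReal m v.toNNReal) ≠ ∞) {p : ℝ × ℝ} (hp : 0 < p.2) :
    (InformationTheory.klDiv Q (gaussianReal p.1 p.2⁻¹.toNNReal)).toReal =
      (InformationTheory.klDiv Q (gaussianReal m v.toNNReal)).toReal
        - (log v + (∫ x, (x - m) ^ 2 ∂Q) / v) / 2
        + (-1 / 2) * log p.2 + (∫ x, (x - m) ^ 2 ∂Q) / 2 * p.2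
        + (-∫ x, (x - m) ∂Q) * (p.2 * (p.1 - m)) + 1 / 2 * (p.2 * (p.1 - m) ^ 2) := by
  rw [toReal_klDiv_gaussianReal (toNNReal_pos.2 hv).ne' (toNNReal_pos.2 (inv_pos.2 hp)).ne' hQ,
    integral_sub_sq (memLp_id_two_of_klDiv_gaussianReal_ne_top hQ) m p.1, coe_toNNReal v hv.le,
    coe_toNNReal _ (inv_pos.2 hp).le, log_inv]
  field_simp
  ring

lemma klDiv_gaussianReal_inv_ne_top_iff (hv : 0 < v) {p : ℝ × ℝ} (hp : 0 < p.2) :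
    InformationTheory.klDiv Q (gaussianReal p.1 p.2⁻¹.toNNReal) ≠ ∞ ↔
      InformationTheory.klDiv Q (gaussianReal m v.toNNReal) ≠ ∞ :=
  have hv_ne : v.toNNReal ≠ 0 := (toNNReal_pos.2 hv).ne'
  have hp_ne : p.2⁻¹.toNNReal ≠ 0 := (toNNReal_pos.2 (inv_pos.2 hp)).ne'
  ⟨klDiv_gaussianReal_ne_top hp_ne hv_ne, klDiv_gaussianReal_ne_top hv_ne hp_ne⟩

lemma integrable_toReal_klDiv_normalGamma (hκ : 0 < κ) (hα : 0 < α) (hβ : 0 < β) (hv : 0 < v)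
    (hQ : InformationTheory.klDiv Q (gaussianReal m v.toNNReal) ≠ ∞) :
    Integrable (fun p ↦ (InformationTheory.klDiv Q (gaussianReal p.1 p.2⁻¹.toNNReal)).toReal)
      (normalGamma m κ α β) :=
  (integrable_sufficientStatistics_normalGamma hκ hα hβ ..).congr
    (.symm <| (ae_pos_snd_normalGamma hκ).mono fun _ ↦ toReal_klDiv_gaussianReal_inv hv hQ)

lemma integral_toReal_klDiv_normalGamma (hκ : 0 < κ) (hα : 0 < α) (hβ : 0 < β)
    (hQ : InformationTheory.klDiv Q (gaussianReal m (β / α).toNNReal) ≠ ∞) :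
    ∫ p, (InformationTheory.klDiv Q (gaussianReal p.1 p.2⁻¹.toNNReal)).toReal
        ∂normalGamma m κ α β =
      (InformationTheory.klDiv Q (gaussianReal m (β / α).toNNReal)).toReal
        + 1 / 2 * (1 / κ + log α - digamma α) := by
  rw [integral_congr_ae ((ae_pos_snd_normalGamma hκ).mono fun _ ↦
      toReal_klDiv_gaussianReal_inv (div_pos hβ hα) hQ),
    integral_sufficientStatistics_normalGamma hκ hα hβ, log_div hβ.ne' hα.ne']
  field_simp
  ring

theorem normalGamma_posterior_averaged_klDiv_general
    (μₙ κₙ αₙ βₙ : ℝ) (hκ : 0 < κₙ) (hα : 0 < αₙ) (hβ : 0 < βₙ)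
    (Q : Measure ℝ) [IsProbabilityMeasure Q] :
    ((∫⁻ pr, klDiv Q (gaussianReal pr.1 (Real.toNNReal pr.2⁻¹))
        ∂(normalGamma μₙ κₙ αₙ βₙ) : ℝ≥0∞) : EReal)
      = ((klDiv Q (gaussianReal μₙ (Real.toNNReal (βₙ / αₙ))) : ℝ≥0∞) : EReal)
        + (((1 / 2) * (1 / κₙ + Real.log αₙ - digamma αₙ) : ℝ) : EReal) := by
  have := isProbabilityMeasure_normalGamma (m := μₙ) hκ hα hβ
  have hv : 0 < βₙ / αₙ := div_pos hβ hα
  have hfin := (ae_pos_snd_normalGamma (m := μₙ) (α := αₙ) (β := βₙ) hκ).mono fun _ ↦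
    klDiv_gaussianReal_inv_ne_top_iff (Q := Q) (m := μₙ) hv
  simp_rw [klDiv_eq_informationTheory_klDiv]
  by_cases hQ : InformationTheory.klDiv Q (gaussianReal μₙ (βₙ / αₙ).toNNReal) = ∞
  · have htop : ∀ᵐ p ∂normalGamma μₙ κₙ αₙ βₙ,
        InformationTheory.klDiv Q (gaussianReal p.1 p.2⁻¹.toNNReal) = ∞ :=
      hfin.mono fun p hp ↦ (not_iff_not.1 hp).2 hQ
    rw [lintegral_congr_ae htop, hQ, lintegral_const, measure_univ, mul_one, EReal.coe_ennreal_top,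
      EReal.top_add_coe]
  · rw [coe_lintegral_eq_coe_integral_toReal (hfin.mono fun p hp ↦ hp.2 hQ)
        (integrable_toReal_klDiv_normalGamma hκ hα hβ hv hQ),
      integral_toReal_klDiv_normalGamma hκ hα hβ hQ, EReal.coe_add, EReal.coe_ennreal_toReal hQ]

end PosteriorAverage

theorem normalGamma_posterior_averaged_klDiv
    (μₙ κₙ αₙ βₙ : ℝ) (hκ : 0 < κₙ) (hα : 0 < αₙ) (hβ : 0 < βₙ)
    (Q : Measure ℝ) [IsProbabilityMeasure Q]
    (q : ℝ → ℝ) (hq_nonneg : ∀ x, 0 ≤ q x)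
    (hQ_density : Q = MeasureTheory.volume.withDensity (fun ξ => ENNReal.ofReal (q ξ)))
    (hint_entropy : Integrable (fun ξ => q ξ * Real.log (q ξ)))
    (hint_second_moment : Integrable (fun ξ => q ξ * ξ ^ 2)) :
    ((∫⁻ pr, klDiv Q (gaussianReal pr.1 (Real.toNNReal pr.2⁻¹))
        ∂(normalGamma μₙ κₙ αₙ βₙ) : ℝ≥0∞) : EReal)
      = ((klDiv Q (gaussianReal μₙ (Real.toNNReal (βₙ / αₙ))) : ℝ≥0∞) : EReal)
        + (((1 / 2) * (1 / κₙ + Real.log αₙ - digamma αₙ) : ℝ) : EReal) :=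
  normalGamma_posterior_averaged_klDiv_general μₙ κₙ αₙ βₙ hκ hα hβ Q
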